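/- Suppose (γ_k)_{k=0}^∞ is a nontrivial Legendre multiplier sequence. Then there exists an integer m ≥ 0 such that γ_k = 0 for all k < m and γ_k ≠ 0 for all k ≥ m. -/

import Mathlib

open Polynomial

/-- A real polynomial is *hyperbolic* if all of its complex roots are real
(the zero polynomial and nonzero constants are vacuously hyperbolic). -/
def Hyperbolic (p : Polynomial ℝ) : Prop :=
  ∀ z ∈ (p.map (algebraMap ℝ ℂ)).roots, z.im = 0

/-- `γ` is a multiplier sequence for the simple set `q`: the linear operator
sending `q k` to `γ k • q k` maps hyperbolic polynomials to hyperbolic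
polynomials.  (Since `q` is a simple set, every real polynomial has a unique
expansion `∑ a k • q k`, so this quantification over coefficient families
expresses exactly that property.) -/
def IsMultiplierSeqFor (q : ℕ → Polynomial ℝ) (γ : ℕ → ℝ) : Prop :=
  ∀ (n : ℕ) (a : ℕ → ℝ),
    Hyperbolic (∑ k ∈ Finset.range n, C (a k) * q k) →
    Hyperbolic (∑ k ∈ Finset.range n, C (γ k * a k) * q k)

/-- The Legendre polynomials, via Rodrigues' formula
`Le n = (1/(2^n n!)) Dⁿ[(x²-1)ⁿ]`. -/
noncomputable def legendre (n : ℕ) : Polynomial ℝ :=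
  C (1 / (2 ^ n * n.factorial : ℝ)) * derivative^[n] ((X ^ 2 - 1) ^ n)

/-- A Legendre multiplier sequence. -/
def IsLegendreMS (γ : ℕ → ℝ) : Prop := IsMultiplierSeqFor legendre γ

/-- A sequence is a *trivial* (Legendre multiplier) sequence if it is constant
or all of its nonzero terms occur in at most two consecutive positions. -/
def IsTrivialSeq (γ : ℕ → ℝ) : Prop :=
  (∃ c : ℝ, ∀ k, γ k = c) ∨ (∃ n : ℕ, ∀ k, k ≠ n → k ≠ n + 1 → γ k = 0)

/-!
If `γ N = 0`, every polynomial of degree at most `N + 1` is sent to a hyperbolic one: `q N` has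
only simple real zeros, so `q N + ε f` is hyperbolic for all small `ε`, and the operator annihilates
`q N`. On the other hand a pencil `p + t r`, `t ∈ ℝ`, with `r ≠ 0` and `deg r + 2 ≤ deg p` cannot
consist of hyperbolic polynomials: differentiating `deg r` times makes `r` a nonzero constant, and
Laguerre's inequality `f f'' ≤ f' ^ 2` then fails for some `t`. Hence `γ N = 0` forces
`γ a = 0` or `γ b = 0` whenever `a + 2 ≤ b ≤ N + 1`. A zero beyond the first nonzero term `γ m`
therefore propagates to all later terms and leaves only `γ m` and `γ (m + 1)` possibly nonzero.
-/

open Filter Topology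

lemma hyperbolic_iff_splits {p : ℝ[X]} : Hyperbolic p ↔ p.Splits := by
  refine ⟨fun hp => ?_, fun hp z hz => ?_⟩
  · refine Splits.of_splits_map (algebraMap ℝ ℂ) (IsAlgClosed.splits _) fun z hz => ?_
    exact ⟨z.re, Complex.ext rfl (hp z hz).symm⟩
  · rw [hp.roots_map, Multiset.mem_map] at hz
    obtain ⟨x, -, rfl⟩ := hz
    exact Complex.ofReal_im x

lemma natDegree_iterate_derivative_eq {R : Type*} [Semiring R] [IsAddTorsionFree R] (p : R[X])
    (k : ℕ) : (derivative^[k] p).natDegree = p.natDegree - k := by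
  induction k with
  | zero => rfl
  | succ k ih => rw [Function.iterate_succ_apply', natDegree_derivative, ih, Nat.sub_sub]

lemma splits_derivative {p : ℝ[X]} (hp : p.Splits) : (derivative p).Splits := by
  rw [splits_iff_card_roots] at hp ⊢
  refine le_antisymm (card_roots' _) ?_
  have := p.card_roots_le_derivative
  rw [natDegree_derivative]
  lia

lemma splits_iterate_derivative {p : ℝ[X]} (hp : p.Splits) (k : ℕ) :
    (derivative^[k] p).Splits := by
  induction k with
  | zero => exact hp
  | succ k ih =>
    rw [Function.iterate_succ_apply']
    exact splits_derivative ih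

section Laguerre

variable {F : Type*} [Field F] [LinearOrder F] [IsStrictOrderedRing F] {p : F[X]}

/- `W p = p' ^ 2 - p p''` satisfies `W (f g) = f ^ 2 W g + g ^ 2 W f`. -/
lemma eval_mul_eval_derivative_derivative_lt (hp : p.Splits) (hp' : derivative p ≠ 0) {x : F}
    (hx : eval x p ≠ 0) :
    eval x p * eval x (derivative (derivative p)) < eval x (derivative p) ^ 2 := by
  induction hp using Submonoid.closure_induction with
  | mem f hf =>
    rcases hf with ⟨a, rfl⟩ | ⟨a, rfl⟩ <;> simp at *
  | one => simp at hp'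
  | mul f g _ _ ihf ihg =>
    rw [eval_mul] at hx
    have hfx := left_ne_zero_of_mul hx
    have hgx := right_ne_zero_of_mul hx
    simp only [derivative_mul, derivative_add, eval_add, eval_mul] at hp' ⊢
    by_cases hf' : derivative f = 0 <;> by_cases hg' : derivative g = 0
    · simp [hf', hg'] at hp'
    · have := mul_pos (sq_pos_of_ne_zero hfx) (sub_pos.mpr (ihg hg' hgx))
      simp only [hf', derivative_zero, eval_zero]
      linear_combination this
    · have := mul_pos (sq_pos_of_ne_zero hgx) (sub_pos.mpr (ihf hf' hfx))
      simp only [hg', derivative_zero, eval_zero]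
      linear_combination this
    · have h₁ := mul_pos (sq_pos_of_ne_zero hfx) (sub_pos.mpr (ihg hg' hgx))
      have h₂ := mul_pos (sq_pos_of_ne_zero hgx) (sub_pos.mpr (ihf hf' hfx))
      linear_combination h₁ + h₂

lemma eval_mul_eval_derivative_derivative_le (hp : p.Splits) (x : F) :
    eval x p * eval x (derivative (derivative p)) ≤ eval x (derivative p) ^ 2 := by
  by_cases hp' : derivative p = 0
  · simp [hp']
  by_cases hx : eval x p = 0
  · simpa [hx] using sq_nonneg _
  exact (eval_mul_eval_derivative_derivative_lt hp hp' hx).le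

end Laguerre

lemma eq_zero_of_forall_splits_add_C_mul {p r : ℝ[X]} (hdeg : r.natDegree + 2 ≤ p.natDegree)
    (h : ∀ t : ℝ, (p + C t * r).Splits) : r = 0 := by
  by_contra hr
  set d := r.natDegree
  set P := derivative^[d] p
  obtain ⟨a, ha⟩ : ∃ a, eval a (derivative (derivative P)) ≠ 0 := by
    by_contra! hzero
    have hP : derivative (derivative P) = 0 := Polynomial.funext fun x => by simpa using hzero x
    rw [derivative_eq_zero, natDegree_derivative, natDegree_iterate_derivative_eq] at hP
    lia
  obtain ⟨c, hc⟩ : ∃ c, derivative^[d] r = C c :=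
    ⟨_, eq_C_of_natDegree_eq_zero (by simp [natDegree_iterate_derivative_eq, d])⟩
  have hc₀ : c ≠ 0 := by
    have := congr_arg (coeff · 0) hc
    simp only [coeff_iterate_derivative, coeff_C_zero, zero_add, Nat.descFactorial_self] at this
    rw [← this]
    exact smul_ne_zero d.factorial_ne_zero (leadingCoeff_ne_zero.mpr hr)
  have laguerre (t : ℝ) :
      (eval a P + t * c) * eval a (derivative (derivative P)) ≤ eval a (derivative P) ^ 2 := by
    simpa [iterate_derivative_C_mul, hc] using
      eval_mul_eval_derivative_derivative_le (splits_iterate_derivative (h t) d) a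
  -- This value of `t` turns the left-hand side into `eval a (derivative P) ^ 2 + 1`.
  have := laguerre (((eval a (derivative P) ^ 2 + 1) / eval a (derivative (derivative P))
    - eval a P) / c)
  rw [div_mul_cancel₀ _ hc₀, add_sub_cancel, div_mul_cancel₀ _ ha] at this
  linarith

lemma eventually_exists_isRoot_add_C_mul {p : ℝ[X]} {r : ℝ} (hr : p.IsRoot r)
    (hr' : eval r (derivative p) ≠ 0) (g : ℝ[X]) {U : Set ℝ} (hU : U ∈ 𝓝 r) :
    ∀ᶠ ε in 𝓝 (0 : ℝ), ∃ x ∈ U, (p + C ε * g).IsRoot x := by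
  obtain ⟨δ, hδ, hball⟩ := Metric.mem_nhds_iff.mp hU
  have hmem : Metric.ball r δ ∈ 𝓝 r := Metric.ball_mem_nhds r hδ
  rw [← Polynomial.deriv] at hr'
  obtain ⟨a, ha, hpa⟩ : ∃ a ∈ Metric.ball r δ, eval a p < 0 := by
    by_contra! hnonneg
    have : IsLocalMin (fun x => eval x p) r :=
      eventually_of_mem hmem fun x hx => hr.le.trans (hnonneg x hx)
    exact hr' this.deriv_eq_zero
  obtain ⟨b, hb, hpb⟩ : ∃ b ∈ Metric.ball r δ, 0 < eval b p := by
    by_contra! hnonpos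
    have : IsLocalMax (fun x => eval x p) r :=
      eventually_of_mem hmem fun x hx => (hnonpos x hx).trans hr.ge
    exact hr' this.deriv_eq_zero
  have hcont (y : ℝ) : Tendsto (fun ε => eval y (p + C ε * g)) (𝓝 0) (𝓝 (eval y p)) := by
    refine Continuous.tendsto' ?_ _ _ (by simp)
    simp only [eval_add, eval_mul, eval_C]
    fun_prop
  filter_upwards [(hcont a).eventually_lt_const hpa, (hcont b).eventually_const_lt hpb]
    with ε hεa hεb
  obtain ⟨x, hx, hroot⟩ := (convex_ball r δ).isPreconnected.intermediate_value ha hb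
    (p + C ε * g).continuous.continuousOn ⟨hεa.le, hεb.le⟩
  exact ⟨x, hball hx, hroot⟩

lemma splits_of_natDegree_le_card_roots_add_one {F : Type*} [Field F] {f : F[X]}
    (hf : f.natDegree ≤ f.roots.card + 1) : f.Splits := by
  obtain ⟨g, hprod, hcard, -⟩ := exists_prod_multiset_X_sub_C_mul f
  rw [← hprod]
  refine (Splits.multisetProd fun h hh => ?_).mul (Splits.of_natDegree_le_one (by lia))
  obtain ⟨a, -, rfl⟩ := Multiset.mem_map.mp hh
  exact Splits.X_sub_C a

/- Each of the `deg p` simple roots persists under the perturbation, which leaves a cofactor of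
degree at most one. -/
lemma eventually_splits_add_C_mul {p g : ℝ[X]} (hp : p.Splits) (hsep : p.Separable)
    (hg : g.natDegree ≤ p.natDegree + 1) : ∀ᶠ ε in 𝓝 (0 : ℝ), (p + C ε * g).Splits := by
  obtain ⟨U, hU, hdisj⟩ := p.roots.toFinset.finite_toSet.t2_separation
  have hroots : ∀ᶠ ε in 𝓝 (0 : ℝ), ∀ r ∈ p.roots.toFinset, ∃ x ∈ U r, (p + C ε * g).IsRoot x := by
    refine (eventually_all_finset _).mpr fun r hr => ?_
    have hr : p.IsRoot r := isRoot_of_mem_roots (Multiset.mem_toFinset.mp hr)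
    exact eventually_exists_isRoot_add_C_mul hr (hsep.eval₂_derivative_ne_zero (RingHom.id ℝ) hr) g
      ((hU r).2.mem_nhds (hU r).1)
  filter_upwards [hroots] with ε hε
  choose! x hxU hx using hε
  set f := p + C ε * g
  rcases eq_or_ne f 0 with hf | hf
  · simp [hf]
  have hinj : Set.InjOn x p.roots.toFinset := fun r hr s hs hrs => by
    by_contra hne
    exact Set.disjoint_left.mp (hdisj hr hs hne) (hxU r hr) (hrs ▸ hxU s hs)
  have hcard : p.natDegree ≤ f.roots.card :=
    calc p.natDegree = p.roots.toFinset.card := by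
          rw [hp.natDegree_eq_card_roots, Multiset.toFinset_card_of_nodup (nodup_roots hsep)]
      _ ≤ f.roots.toFinset.card :=
          Finset.card_le_card_of_injOn x (fun r hr => by simpa [hf] using hx r hr) hinj
      _ ≤ f.roots.card := Multiset.toFinset_card_le _
  refine splits_of_natDegree_le_card_roots_add_one ?_
  calc f.natDegree ≤ max p.natDegree (C ε * g).natDegree := natDegree_add_le _ _
    _ ≤ f.roots.card + 1 := by
      have := natDegree_C_mul_le ε g
      lia

namespace IsMultiplierSeqFor

variable {q : Sequence ℝ} {γ : ℕ → ℝ} {N a b : ℕ}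

lemma splits_sum_of_eq_zero (h : IsMultiplierSeqFor q γ) (hsplit : (q N).Splits)
    (hsep : (q N).Separable) (hN : γ N = 0) (c : ℕ → ℝ) :
    (∑ k ∈ Finset.range (N + 2), C (γ k * c k) * q k).Splits := by
  set f := ∑ k ∈ Finset.range (N + 2), C (c k) * q k
  have hf : f.natDegree ≤ (q N).natDegree + 1 := by
    refine natDegree_sum_le_of_forall_le _ _ fun k hk => (natDegree_C_mul_le _ _).trans ?_
    simpa [Nat.lt_succ_iff] using hk
  obtain ⟨ε, hε, hε₀⟩ : ∃ ε : ℝ, (q N + C ε * f).Splits ∧ ε ≠ 0 :=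
    (((eventually_splits_add_C_mul hsplit hsep hf).filter_mono nhdsWithin_le_nhds).and
      self_mem_nhdsWithin).exists (f := 𝓝[≠] 0)
  have hexpand : q N + C ε * f =
      ∑ k ∈ Finset.range (N + 2), C ((Pi.single N 1 : ℕ → ℝ) k + ε * c k) * q k := by
    simp [f, Finset.mul_sum, add_mul, Finset.sum_add_distrib, Pi.single_apply, mul_assoc]
  have himage := hyperbolic_iff_splits.mp
    (h (N + 2) _ (hyperbolic_iff_splits.mpr (hexpand ▸ hε)))
  convert himage.C_mul ε⁻¹ using 1
  rw [Finset.mul_sum]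
  refine Finset.sum_congr rfl fun k _ => ?_
  rw [← mul_assoc, ← C_mul]
  congr 2
  rcases eq_or_ne k N with rfl | hkN
  · simp [hN]
  · simp only [Pi.single_eq_of_ne hkN, zero_add]
    field_simp

lemma eq_zero_or_eq_zero_of_add_two_le (h : IsMultiplierSeqFor q γ) (hsplit : (q N).Splits)
    (hsep : (q N).Separable) (hN : γ N = 0) (hab : a + 2 ≤ b) (hbN : b ≤ N + 1) :
    γ a = 0 ∨ γ b = 0 := by
  by_contra! ⟨ha, hb⟩
  have hpencil (t : ℝ) : (C (γ b) * q b + C t * (C (γ a) * q a)).Splits := by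
    convert h.splits_sum_of_eq_zero hsplit hsep hN (Pi.single b 1 + t • Pi.single a 1)
    have ha' : a < N + 2 := by lia
    have hb' : b < N + 2 := by lia
    simp only [Pi.add_apply, Pi.single_apply, Pi.smul_apply, smul_eq_mul, mul_ite, mul_one,
      mul_zero, mul_add, map_add, apply_ite C, map_zero, map_mul, add_mul, ite_mul, zero_mul,
      Finset.sum_add_distrib, Finset.sum_ite_eq', Finset.mem_range, ha', hb', if_true]
    ring
  refine mul_ne_zero (C_ne_zero.mpr ha) (q.ne_zero a)
    (eq_zero_of_forall_splits_add_C_mul ?_ hpencil)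
  simpa [natDegree_C_mul, ha, hb] using hab

end IsMultiplierSeqFor

lemma rootMultiplicity_derivative_le_max {p : ℝ[X]} (hp : p.Splits) (x : ℝ) :
    (derivative p).rootMultiplicity x ≤ max 1 (p.rootMultiplicity x - 1) := by
  by_cases hx : p.IsRoot x
  · simp [derivative_rootMultiplicity_of_root hx]
  refine le_max_of_le_left (not_lt.mp fun hlt => ?_)
  have hp' : derivative p ≠ 0 := by
    intro h
    simp [h] at hlt
  obtain ⟨hx', hx''⟩ := (one_lt_rootMultiplicity_iff_isRoot hp').mp hlt
  simpa [hx'.eq_zero, hx''.eq_zero] using eval_mul_eval_derivative_derivative_lt hp hp' hx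

lemma rootMultiplicity_iterate_derivative_le_max {p : ℝ[X]} (hp : p.Splits) (x : ℝ) (k : ℕ) :
    (derivative^[k] p).rootMultiplicity x ≤ max 1 (p.rootMultiplicity x - k) := by
  induction k with
  | zero => simp
  | succ k ih =>
    rw [Function.iterate_succ_apply']
    have := rootMultiplicity_derivative_le_max (splits_iterate_derivative hp k) x
    lia

lemma natDegree_legendre (n : ℕ) : (legendre n).natDegree = n := by
  rw [legendre, natDegree_C_mul (by positivity), natDegree_iterate_derivative_eq, natDegree_pow]
  have : (X ^ 2 - 1 : ℝ[X]).natDegree = 2 := by compute_degree!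
  lia

lemma legendre_ne_zero (n : ℕ) : legendre n ≠ 0 := by
  rcases n.eq_zero_or_pos with rfl | hn
  · simp [legendre]
  · exact ne_zero_of_natDegree_gt (hn.trans_eq (natDegree_legendre n).symm)

lemma splits_X_sq_sub_one_pow (n : ℕ) : ((X ^ 2 - 1 : ℝ[X]) ^ n).Splits := by
  have hfactor : (X ^ 2 - 1 : ℝ[X]) = (X - C 1) * (X - C (-1)) := by
    rw [C_neg, C_1]
    ring
  exact hfactor ▸ ((Splits.X_sub_C 1).mul (Splits.X_sub_C (-1))).pow n

lemma splits_legendre (n : ℕ) : (legendre n).Splits :=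
  (splits_iterate_derivative (splits_X_sq_sub_one_pow n) n).C_mul _

lemma separable_legendre (n : ℕ) : (legendre n).Separable := by
  refine (nodup_roots_iff_of_splits (legendre_ne_zero n) (splits_legendre n)).mp ?_
  refine Multiset.nodup_iff_count_le_one.mpr fun x => ?_
  have hsq : (X ^ 2 - 1 : ℝ[X]).rootMultiplicity x ≤ 1 :=
    rootMultiplicity_le_one_of_separable (X_pow_sub_one_separable_iff.mpr (by norm_num)) x
  have hpow : ((X ^ 2 - 1 : ℝ[X]) ^ n).rootMultiplicity x ≤ n := by
    rw [← count_roots, roots_pow, Multiset.count_nsmul, count_roots]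
    exact (Nat.mul_le_mul_left n hsq).trans_eq n.mul_one
  rw [legendre, roots_C_mul _ (by positivity), count_roots]
  have := rootMultiplicity_iterate_derivative_le_max (splits_X_sq_sub_one_pow n) x n
  lia

/-- The Legendre polynomials bundled as a simple set. -/
noncomputable def legendreSequence : Sequence ℝ where
  elems' := legendre
  degree_eq' n := by rw [degree_eq_natDegree (legendre_ne_zero n), natDegree_legendre]

theorem stmt_7_general (q : Sequence ℝ) (hsplit : ∀ n, (q n).Splits)
    (hsep : ∀ n, (q n).Separable) (γ : ℕ → ℝ) (h : IsMultiplierSeqFor q γ)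
    (hnt : ¬ ∃ n, ∀ k, k ≠ n → k ≠ n + 1 → γ k = 0) :
    ∃ m, (∀ k, k < m → γ k = 0) ∧ ∀ k, m ≤ k → γ k ≠ 0 := by
  have hgap {a b N : ℕ} (hN : γ N = 0) (hab : a + 2 ≤ b) (hbN : b ≤ N + 1) :
      γ a = 0 ∨ γ b = 0 :=
    h.eq_zero_or_eq_zero_of_add_two_le (hsplit N) (hsep N) hN hab hbN
  obtain ⟨m, hm, hlt⟩ : ∃ m, γ m ≠ 0 ∧ ∀ k < m, γ k = 0 := by
    classical
    have hne : ∃ k, γ k ≠ 0 := by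
      by_contra! hzero
      exact hnt ⟨0, fun k _ _ => hzero k⟩
    exact ⟨Nat.find hne, Nat.find_spec hne, fun k hk => not_not.mp (Nat.find_min hne hk)⟩
  refine ⟨m, hlt, fun N hmN hN => ?_⟩
  have hmN : m < N := hmN.lt_of_ne fun heq => hm (heq ▸ hN)
  have htail : ∀ j, N ≤ j → γ j = 0 := Nat.le_induction hN fun j hj hγj =>
    (hgap hγj (by lia) le_rfl).resolve_left hm
  obtain ⟨k, hkm, hkm', hk⟩ : ∃ k, k ≠ m ∧ k ≠ m + 1 ∧ γ k ≠ 0 := by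
    by_contra! hall
    exact hnt ⟨m, hall⟩
  have hmk : m ≤ k := not_lt.mp fun hkm => hk (hlt k hkm)
  have hkN : k < N := not_le.mp fun hNk => hk (htail k hNk)
  exact (hgap hN (by lia) (by lia)).elim hm hk

theorem stmt_7 (γ : ℕ → ℝ) (h : IsLegendreMS γ) (hnt : ¬ IsTrivialSeq γ) :
    ∃ m : ℕ, (∀ k, k < m → γ k = 0) ∧ (∀ k, m ≤ k → γ k ≠ 0) := by
  exact stmt_7_general legendreSequence splits_legendre separable_legendre γ h
    fun htwo => hnt (.inr htwo)
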